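/- Let μ ≤_c ν be probability measures on ℝ with finite first moments and let (μ_{[0,u]})_{u∈[0,1]} be an increasing (for setwise order) curve with μ_{[0,u]}(ℝ) = u and μ_{[0,1]} = μ. Define ν_{[0,u]} = S^ν(μ_{[0,u]}). Then for u ≤ v one has ν_{[0,u]} ≤ ν_{[0,v]} setwise and ν_{[0,u]}(ℝ) = u; i.e. the shadow curve is again a primitive curve. -/

import Mathlib

open MeasureTheory

/-- Convex order on finite measures: `∫ φ dμ ≤ ∫ φ dν` for every convex `φ` for which
both integrals exist. -/
def ConvexOrder (μ ν : Measure ℝ) : Prop :=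
  ∀ φ : ℝ → ℝ, ConvexOn ℝ Set.univ φ → Integrable φ μ → Integrable φ ν →
    ∫ x, φ x ∂μ ≤ ∫ x, φ x ∂ν

/-- `μ ≤_{c,+} ν`: there exists `η` with `μ ≤_c η` and `η ≤ ν` setwise. -/
def ConvexPlusOrder (μ ν : Measure ℝ) : Prop :=
  ∃ η : Measure ℝ, ConvexOrder μ η ∧ η ≤ ν

/-- `η` is the shadow of `μ` in `ν`: the `≤_c`-smallest measure `η` with `μ ≤_c η`
and `η ≤ ν`. -/
def IsShadow (μ ν η : Measure ℝ) : Prop :=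
  ConvexOrder μ η ∧ η ≤ ν ∧
    ∀ η' : Measure ℝ, ConvexOrder μ η' → η' ≤ ν → ConvexOrder η η'

/-!
A finite measure `m ≤ ν` with first moment is encoded by its call potential `C m`, whose second
derivative is `m`: thus `m ≤ n` iff `C n - C m` is convex, and, mass and mean being equal, `m` is
below `n` in the convex order iff `C m ≤ C n`. If `q` is the convex envelope of `C ν - C γ`, then
`C ν - q` is again convex, hence the call potential of a measure below `ν`, and it is the least one
above `C γ`: the shadow `η` of `γ` is characterised by `C ν - C η = env (C ν - C γ)`.

The associativity of shadows becomes `env (env h - c) = env (h - c)` for convex `c`. For `γ₁ ≤ γ₂`,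
take `h = C ν - C γ₁` and `c = C (γ₂ - γ₁)`: then `C η₂ - C η₁ = env h - env (env h - c)`, and the
difference between a convex function `f` and the convex envelope of `f - c` is convex. Hence
`η₁ ≤ η₂`.
-/

section ConvexFunctions

open Set Filter Topology

lemma convexOn_affine (c d : ℝ) : ConvexOn ℝ univ (fun x : ℝ => c + d * x) :=
  (convexOn_const c convex_univ).add ((LinearMap.mul ℝ ℝ d).convexOn convex_univ)

lemma convexOn_univ_iff_forall_le_affine {f : ℝ → ℝ} :
    ConvexOn ℝ univ f ↔ ∀ ⦃s t c d : ℝ⦄, f s ≤ c + d * s → f t ≤ c + d * t →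
      ∀ m ∈ Icc s t, f m ≤ c + d * m := by
  constructor
  · intro hf s t c d hs ht m hm
    have hle := (hf.add (convexOn_affine (-c) (-d))).le_max_of_mem_Icc (mem_univ s) (mem_univ t) hm
    have hmax : max (f s + (-c + -d * s)) (f t + (-c + -d * t)) ≤ 0 :=
      max_le (by linarith) (by linarith)
    simp only [Pi.add_apply] at hle
    linarith
  · intro h
    refine LinearOrder.convexOn_of_lt convex_univ fun x _ y _ hxy a b ha hb hab => ?_
    obtain rfl : a = 1 - b := by linarith
    simp only [smul_eq_mul]
    have hslope : (f y - f x) / (y - x) * (y - x) = f y - f x :=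
      div_mul_cancel₀ _ (sub_ne_zero.2 hxy.ne')
    have hchord := h (s := x) (t := y) (c := f x - (f y - f x) / (y - x) * x)
      (d := (f y - f x) / (y - x)) (by linarith) (by linarith) ((1 - b) * x + b * y)
      ⟨by nlinarith, by nlinarith⟩
    linear_combination hchord + b * hslope

lemma convexOn_piecewise_Icc_sup {q h : ℝ → ℝ} (hq : ConvexOn ℝ univ q) (hh : ConvexOn ℝ univ h)
    {x z : ℝ} (hx : h x ≤ q x) (hz : h z ≤ q z) :
    ConvexOn ℝ univ ((Icc x z).piecewise (q ⊔ h) q) := by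
  have hle : q ≤ (Icc x z).piecewise (q ⊔ h) q :=
    le_piecewise (fun _ _ => le_sup_left) fun _ _ => le_rfl
  have hle' : ∀ y ∈ Icc x z, h y ≤ (Icc x z).piecewise (q ⊔ h) q y := fun y hy => by
    rw [piecewise_eq_of_mem _ _ _ hy]; exact le_sup_right
  rw [convexOn_univ_iff_forall_le_affine] at hq hh ⊢
  intro s t c d hs ht m hm
  have hqA := hq ((hle s).trans hs) ((hle t).trans ht)
  by_cases hmI : m ∈ Icc x z
  · rw [piecewise_eq_of_mem _ _ _ hmI]
    refine max_le (hqA m hm) (hh (s := max s x) (t := min t z) ?_ ?_ m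
      ⟨max_le hm.1 hmI.1, le_min hm.2 hmI.2⟩)
    · rcases le_total s x with h | h
      · rw [max_eq_right h]; exact hx.trans (hqA x ⟨h, hmI.1.trans hm.2⟩)
      · rw [max_eq_left h]; exact (hle' s ⟨h, hm.1.trans hmI.2⟩).trans hs
    · rcases le_total t z with h | h
      · rw [min_eq_left h]; exact (hle' t ⟨hmI.1.trans hm.2, h⟩).trans ht
      · rw [min_eq_right h]; exact hz.trans (hqA z ⟨hm.1.trans hmI.2, h⟩)
  · rw [piecewise_eq_of_notMem _ _ _ hmI]
    exact hqA m hm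

lemma convexOn_iSup {ι E : Type*} [Nonempty ι] [AddCommMonoid E] [Module ℝ E] {f : ι → E → ℝ}
    (hf : ∀ i, ConvexOn ℝ univ (f i)) (hbdd : ∀ x, BddAbove (range fun i => f i x)) :
    ConvexOn ℝ univ fun x => ⨆ i, f i x := by
  refine ⟨convex_univ, fun x _ y _ a b ha hb hab => ciSup_le fun i => ?_⟩
  refine ((hf i).2 (mem_univ x) (mem_univ y) ha hb hab).trans ?_
  gcongr
  exacts [le_ciSup (hbdd x) i, le_ciSup (hbdd y) i]

/-- `q` is the convex envelope of `h`: its largest convex minorant. -/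
def IsConvexEnvelope {E : Type*} [AddCommMonoid E] [Module ℝ E] (h q : E → ℝ) : Prop :=
  IsGreatest {r | ConvexOn ℝ univ r ∧ r ≤ h} q

lemma exists_isConvexEnvelope {E : Type*} [AddCommMonoid E] [Module ℝ E] {h r₀ : E → ℝ}
    (hr₀ : ConvexOn ℝ univ r₀) (hle : r₀ ≤ h) : ∃ q, IsConvexEnvelope h q := by
  let S := {r | ConvexOn ℝ univ r ∧ r ≤ h}
  have : Nonempty S := ⟨⟨r₀, hr₀, hle⟩⟩
  have hbdd : ∀ x, BddAbove (range fun r : S => r.1 x) := fun x =>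
    ⟨h x, forall_mem_range.2 fun r => r.2.2 x⟩
  exact ⟨fun x => ⨆ r : S, r.1 x, ⟨convexOn_iSup (fun r => r.2.1) hbdd,
    fun x => ciSup_le fun r => r.2.2 x⟩, fun r hr x => le_ciSup (hbdd x) (⟨r, hr⟩ : S)⟩

namespace IsConvexEnvelope

-- If `f - q ≤ A` at the endpoints of an interval, with `A` affine, then raising `q` to
-- `q ⊔ (f - A)` on that interval gives another convex minorant of `f - g`.
lemma convexOn_sub {f g q : ℝ → ℝ} (hq : IsConvexEnvelope (f - g) q)
    (hf : ConvexOn ℝ univ f) (hg : ConvexOn ℝ univ g) : ConvexOn ℝ univ (f - q) := by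
  rw [convexOn_univ_iff_forall_le_affine]
  intro x z c d hx hz m hm
  have hg_le : ∀ y, g y ≤ (f - q) y := fun y => le_sub_comm.1 (hq.1.2 y)
  have hgA := convexOn_univ_iff_forall_le_affine.1 hg ((hg_le x).trans hx) ((hg_le z).trans hz)
  set h : ℝ → ℝ := fun y => f y + (-c + -d * y) with h_def
  simp only [Pi.sub_apply] at hx hz ⊢
  have hh : ConvexOn ℝ univ h := hf.add (convexOn_affine _ _)
  have hconv : ConvexOn ℝ univ ((Icc x z).piecewise (q ⊔ h) q) :=
    convexOn_piecewise_Icc_sup hq.1.1 hh (by simp only [h_def]; linarith)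
      (by simp only [h_def]; linarith)
  have hminor : (Icc x z).piecewise (q ⊔ h) q ≤ f - g :=
    piecewise_le (fun y hy => sup_le (hq.1.2 y) <| by
      simp only [h_def, Pi.sub_apply]; linarith [hgA y hy]) fun y _ => hq.1.2 y
  have hle := hq.2 ⟨hconv, hminor⟩ m
  rw [piecewise_eq_of_mem _ _ _ hm] at hle
  have : h m ≤ q m := le_sup_right.trans hle
  simp only [h_def] at this
  linarith

lemma sub_convexOn {E : Type*} [AddCommMonoid E] [Module ℝ E] {h q c r : E → ℝ}
    (hq : IsConvexEnvelope h q) (hc : ConvexOn ℝ univ c) (hr : IsConvexEnvelope (h - c) r) :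
    IsConvexEnvelope (q - c) r :=
  ⟨⟨hr.1.1, le_sub_iff_add_le.2 (hq.2 ⟨hr.1.1.add hc, le_sub_iff_add_le.1 hr.1.2⟩)⟩,
    fun _ hs => hr.2 ⟨hs.1, hs.2.trans (sub_le_sub_right hq.1.2 c)⟩⟩

end IsConvexEnvelope

lemma continuousWithinAt_rightDeriv_of_convexOn {f : ℝ → ℝ} (hf : ConvexOn ℝ univ f) (x : ℝ) :
    ContinuousWithinAt (fun y => derivWithin f (Ioi y) y) (Ici x) x := by
  have hcont : Continuous f := continuousOn_univ.1 (hf.continuousOn isOpen_univ)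
  have hmono := hf.monotoneOn_rightDeriv
  rw [interior_univ, monotoneOn_univ] at hmono
  have hslope : Tendsto (slope f x) (𝓝[>] x) (𝓝 (derivWithin f (Ioi x) x)) :=
    (hasDerivWithinAt_iff_tendsto_slope' (by simp)).1
      (hf.hasDerivWithinAt_rightDeriv_of_mem_interior (by simp))
  rw [← continuousWithinAt_Ioi_iff_Ici]
  refine tendsto_order.2 ⟨fun a ha => ?_, fun b hb => ?_⟩
  · filter_upwards [self_mem_nhdsWithin] with y hy using ha.trans_le (hmono (le_of_lt hy))
  · obtain ⟨z, hzb, hxz : x < z⟩ :=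
      ((hslope.eventually_lt_const hb).and self_mem_nhdsWithin).exists
    have hslope_cont : ContinuousAt (fun y => (f z - f y) / (z - y)) x :=
      ContinuousAt.div (by fun_prop) (by fun_prop) (sub_ne_zero.2 hxz.ne')
    rw [slope_def_field] at hzb
    filter_upwards [nhdsWithin_le_nhds (hslope_cont.eventually_lt_const hzb),
      nhdsWithin_le_nhds (eventually_lt_nhds hxz)] with y hyb hyz
    refine lt_of_le_of_lt ?_ hyb
    rw [← slope_def_field]
    exact hf.rightDeriv_le_slope_of_mem_interior (by simp) (mem_univ z) hyz

/-- The right derivative of a convex function, as a Stieltjes function; its measure is the second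
distributional derivative. -/
noncomputable def rightDerivStieltjes {f : ℝ → ℝ} (hf : ConvexOn ℝ univ f) :
    StieltjesFunction ℝ where
  toFun x := derivWithin f (Ioi x) x
  mono' := by simpa using hf.monotoneOn_rightDeriv
  right_continuous' := continuousWithinAt_rightDeriv_of_convexOn hf

lemma hasDerivWithinAt_rightDerivStieltjes {f : ℝ → ℝ} (hf : ConvexOn ℝ univ f) (x : ℝ) :
    HasDerivWithinAt f (rightDerivStieltjes hf x) (Ioi x) x :=
  hf.hasDerivWithinAt_rightDeriv_of_mem_interior (by simp)

lemma rightDerivStieltjes_eq_of_hasDerivWithinAt {f : ℝ → ℝ} (hf : ConvexOn ℝ univ f) {c x : ℝ}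
    (h : HasDerivWithinAt f c (Ioi x) x) : rightDerivStieltjes hf x = c :=
  h.derivWithin (uniqueDiffWithinAt_Ioi x)

lemma rightDerivStieltjes_add {f g : ℝ → ℝ} (hf : ConvexOn ℝ univ f) (hg : ConvexOn ℝ univ g)
    (hfg : ConvexOn ℝ univ (f + g)) :
    rightDerivStieltjes hfg = rightDerivStieltjes hf + rightDerivStieltjes hg :=
  StieltjesFunction.ext fun x => rightDerivStieltjes_eq_of_hasDerivWithinAt hfg <|
    (hasDerivWithinAt_rightDerivStieltjes hf x).add (hasDerivWithinAt_rightDerivStieltjes hg x)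

lemma real_rightDerivStieltjes_measure_Ioc {f : ℝ → ℝ} (hf : ConvexOn ℝ univ f) {a b : ℝ}
    (hab : a ≤ b) : (rightDerivStieltjes hf).measure.real (Ioc a b) =
      rightDerivStieltjes hf b - rightDerivStieltjes hf a := by
  rw [measureReal_def, StieltjesFunction.measure_Ioc,
    ENNReal.toReal_ofReal (sub_nonneg.2 ((rightDerivStieltjes hf).mono hab))]

lemma eq_add_mul_of_hasDerivWithinAt_Ioi_const {f : ℝ → ℝ} {c a b : ℝ}
    (hf : ContinuousOn f (Icc a b)) (hab : a ≤ b)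
    (hderiv : ∀ x ∈ Ico a b, HasDerivWithinAt f c (Ioi x) x) : f b = f a + c * (b - a) := by
  refine eq_of_has_deriv_right_eq (f := f) (g := fun x => f a + c * (x - a)) (f' := fun _ => c)
    (fun x hx => (hderiv x hx).Ici_of_Ioi) (fun x _ => ?_) hf (by fun_prop) (by simp)
    b (right_mem_Icc.2 hab)
  simpa using ((((hasDerivAt_id x).sub_const a).const_mul c).const_add (f a)).hasDerivWithinAt

lemma eq_zero_of_tendsto_affine_zero {l : Filter ℝ} [l.NeBot]
    (hl : Tendsto (fun x : ℝ => x + 1) l l) {c d : ℝ}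
    (h : Tendsto (fun x : ℝ => c + d * x) l (𝓝 0)) : c = 0 ∧ d = 0 := by
  have hdiff : Tendsto (fun x : ℝ => (c + d * (x + 1)) - (c + d * x)) l (𝓝 (0 - 0)) :=
    (h.comp hl).sub h
  have hd : d = 0 := by
    have hconst : (fun x : ℝ => (c + d * (x + 1)) - (c + d * x)) = fun _ => d := by ext x; ring
    rw [hconst, sub_zero] at hdiff
    exact tendsto_nhds_unique tendsto_const_nhds hdiff
  subst hd
  simp only [zero_mul, add_zero] at h
  exact ⟨tendsto_nhds_unique tendsto_const_nhds h, rfl⟩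

end ConvexFunctions

section Potentials

open Set Filter Topology

/-- The call potential `k ↦ ∫ (x - k)⁺ dm(x)`. Its right derivative at `k` is `-m (k, ∞)`, so that
it determines a finite measure `m` with first moment. -/
noncomputable def callPotential (m : Measure ℝ) (k : ℝ) : ℝ := ∫ x, max (x - k) 0 ∂m

/-- The put potential `k ↦ ∫ (k - x)⁺ dm(x)`. It differs from the call potential by an affine
function encoding the mass and the mean of `m`. -/
noncomputable def putPotential (m : Measure ℝ) (k : ℝ) : ℝ := ∫ x, max (k - x) 0 ∂m

variable {m n : Measure ℝ} [IsFiniteMeasure m] [IsFiniteMeasure n]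

lemma integrable_call (hm : Integrable (fun x : ℝ => x) m) (k : ℝ) :
    Integrable (fun x => max (x - k) 0) m :=
  (hm.sub (integrable_const k)).pos_part

lemma integrable_put (hm : Integrable (fun x : ℝ => x) m) (k : ℝ) :
    Integrable (fun x => max (k - x) 0) m :=
  ((integrable_const k).sub hm).pos_part

lemma convexOn_call (k : ℝ) : ConvexOn ℝ univ fun x : ℝ => max (x - k) 0 :=
  ((convexOn_id convex_univ).sub (concaveOn_const k convex_univ)).sup
    (convexOn_const 0 convex_univ)

lemma convexOn_put (x : ℝ) : ConvexOn ℝ univ fun k : ℝ => max (x - k) 0 :=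
  ((convexOn_const x convex_univ).sub (concaveOn_id convex_univ)).sup
    (convexOn_const 0 convex_univ)

lemma convexOn_callPotential (hm : Integrable (fun x : ℝ => x) m) :
    ConvexOn ℝ univ (callPotential m) := by
  refine ⟨convex_univ, fun k _ l _ a b ha hb hab => ?_⟩
  have hk := (integrable_call hm k).const_mul a
  have hl := (integrable_call hm l).const_mul b
  simp only [callPotential, smul_eq_mul]
  rw [← integral_const_mul, ← integral_const_mul, ← integral_add hk hl]
  exact integral_mono (integrable_call hm _) (hk.add hl) fun x =>
    (convexOn_put x).2 (mem_univ k) (mem_univ l) ha hb hab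

lemma continuous_callPotential (hm : Integrable (fun x : ℝ => x) m) :
    Continuous (callPotential m) :=
  continuousOn_univ.1 ((convexOn_callPotential hm).continuousOn isOpen_univ)

lemma putPotential_eq (hm : Integrable (fun x : ℝ => x) m) (k : ℝ) :
    putPotential m k = callPotential m k + k * m.real univ - ∫ x, x ∂m := by
  have hparity : ∀ x : ℝ, max (k - x) 0 = max (x - k) 0 + (k - x) := fun x => by
    rw [max_add, sub_add_sub_cancel, sub_self, zero_add, max_comm]
  have hi : Integrable (fun x => k - x) m := (integrable_const k).sub hm
  simp only [putPotential, callPotential, hparity]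
  rw [integral_add (integrable_call hm k) hi, integral_sub (integrable_const k) hm,
    integral_const, smul_eq_mul]
  ring

lemma callPotential_add (hm : Integrable (fun x : ℝ => x) m) (hn : Integrable (fun x : ℝ => x) n) :
    callPotential (m + n) = callPotential m + callPotential n :=
  funext fun k => integral_add_measure (integrable_call hm k) (integrable_call hn k)

lemma callPotential_sub (hn : Integrable (fun x : ℝ => x) n) (hle : m ≤ n) :
    callPotential (n - m) = callPotential n - callPotential m := by
  have : IsFiniteMeasure (n - m) := isFiniteMeasure_of_le n Measure.sub_le
  rw [eq_sub_iff_add_eq, ← callPotential_add (hn.mono_measure Measure.sub_le) (hn.mono_measure hle),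
    Measure.sub_add_cancel_of_le hle]

lemma callPotential_mono {m : Measure ℝ} (hn : Integrable (fun x : ℝ => x) n) (hle : m ≤ n) :
    callPotential m ≤ callPotential n := fun k =>
  integral_mono_measure hle (Eventually.of_forall fun _ => le_max_right _ _) (integrable_call hn k)

lemma putPotential_mono {m : Measure ℝ} (hn : Integrable (fun x : ℝ => x) n) (hle : m ≤ n) :
    putPotential m ≤ putPotential n := fun k =>
  integral_mono_measure hle (Eventually.of_forall fun _ => le_max_right _ _) (integrable_put hn k)

lemma tendsto_callPotential_atTop (hm : Integrable (fun x : ℝ => x) m) :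
    Tendsto (callPotential m) atTop (𝓝 0) := by
  rw [← integral_zero ℝ ℝ (μ := m)]
  refine tendsto_integral_filter_of_dominated_convergence (fun x => |x|)
    (Eventually.of_forall fun k => (integrable_call hm k).aestronglyMeasurable) ?_ hm.abs
    (Eventually.of_forall fun x => tendsto_const_nhds.congr' ?_)
  · filter_upwards [eventually_ge_atTop 0] with k hk
    refine Eventually.of_forall fun x => ?_
    rw [Real.norm_eq_abs, abs_of_nonneg (le_max_right _ _)]
    exact max_le (by linarith [le_abs_self x]) (abs_nonneg x)
  · filter_upwards [eventually_ge_atTop x] with k hk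
    rw [max_eq_right (by linarith)]

lemma callPotential_map_neg (m : Measure ℝ) (k : ℝ) :
    callPotential (m.map Neg.neg) k = putPotential m (-k) := by
  rw [callPotential, putPotential, integral_map measurable_neg.aemeasurable (by fun_prop)]
  simp only [neg_sub_comm]

lemma tendsto_putPotential_atBot (hm : Integrable (fun x : ℝ => x) m) :
    Tendsto (putPotential m) atBot (𝓝 0) := by
  have hneg : Integrable (fun x : ℝ => x) (m.map Neg.neg) :=
    (integrable_map_measure aestronglyMeasurable_id measurable_neg.aemeasurable).2 hm.neg
  refine ((tendsto_callPotential_atTop hneg).comp tendsto_neg_atBot_atTop).congr fun k => ?_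
  rw [Function.comp_apply, callPotential_map_neg, neg_neg]

lemma tendsto_slope_call (x k : ℝ) :
    Tendsto (fun l => slope (fun k : ℝ => max (x - k) 0) k l) (𝓝[>] k)
      (𝓝 (-(Ioi k).indicator 1 x)) := by
  simp only [slope_def_field]
  refine tendsto_const_nhds.congr' ?_
  rcases lt_or_ge k x with hk | hk
  · filter_upwards [self_mem_nhdsWithin, nhdsWithin_le_nhds (eventually_lt_nhds hk)]
      with l (hkl : k < l) hlx
    rw [indicator_of_mem (mem_Ioi.2 hk), max_eq_left (by linarith), max_eq_left (by linarith),
      eq_div_iff (by linarith)]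
    simp
  · filter_upwards [self_mem_nhdsWithin] with l (hkl : k < l)
    rw [indicator_of_notMem (notMem_Ioi.2 hk), max_eq_right (by linarith),
      max_eq_right (by linarith)]
    simp

lemma hasDerivWithinAt_callPotential (hm : Integrable (fun x : ℝ => x) m) (k : ℝ) :
    HasDerivWithinAt (callPotential m) (-m.real (Ioi k)) (Ioi k) k := by
  rw [hasDerivWithinAt_iff_tendsto_slope' (by simp)]
  have hslope : ∀ l, ∫ x, slope (fun k : ℝ => max (x - k) 0) k l ∂m =
      slope (callPotential m) k l := fun l => by
    simp only [slope_def_field, callPotential]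
    rw [integral_div, integral_sub (integrable_call hm l) (integrable_call hm k)]
  have hlim : ∫ x, -(Ioi k).indicator 1 x ∂m = -m.real (Ioi k) := by
    rw [integral_neg, integral_indicator_one measurableSet_Ioi]
  rw [← hlim]
  refine (tendsto_integral_filter_of_dominated_convergence (fun _ => 1)
    (Eventually.of_forall fun l => ?_) (Eventually.of_forall fun l => ?_) (integrable_const 1)
    (Eventually.of_forall fun x => tendsto_slope_call x k)).congr hslope
  · simp only [slope_def_field]
    exact (((integrable_call hm l).sub (integrable_call hm k)).div_const _).aestronglyMeasurable
  · refine Eventually.of_forall fun x => ?_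
    rw [slope_def_field, Real.norm_eq_abs, abs_div]
    refine div_le_one_of_le₀ ?_ (abs_nonneg _)
    simpa [abs_sub_comm] using abs_max_sub_max_le_abs (x - l) (x - k) 0

lemma rightDerivStieltjes_callPotential_measure (hm : Integrable (fun x : ℝ => x) m) :
    (rightDerivStieltjes (convexOn_callPotential hm)).measure = m := by
  refine Measure.ext_of_Ioc _ _ fun a b hab => ?_
  have hIoc : m.real (Ioc a b) = m.real (Ioi a) - m.real (Ioi b) := by
    rw [← Ioi_sdiff_Ioi, measureReal_sdiff (Ioi_subset_Ioi hab.le) measurableSet_Ioi]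
  rw [← measureReal_eq_measureReal_iff (measure_Ioc_lt_top.ne),
    real_rightDerivStieltjes_measure_Ioc _ hab.le, hIoc,
    rightDerivStieltjes_eq_of_hasDerivWithinAt _ (hasDerivWithinAt_callPotential hm a),
    rightDerivStieltjes_eq_of_hasDerivWithinAt _ (hasDerivWithinAt_callPotential hm b)]
  ring

lemma measure_eq_add_of_callPotential_eq_add {f g : ℝ → ℝ} (hm : Integrable (fun x : ℝ => x) m)
    (hf : ConvexOn ℝ univ f) (hg : ConvexOn ℝ univ g) (h : f + g = callPotential m) :
    m = (rightDerivStieltjes hf).measure + (rightDerivStieltjes hg).measure := by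
  rw [← StieltjesFunction.measure_add, ← rightDerivStieltjes_add hf hg (hf.add hg)]
  simp only [h, rightDerivStieltjes_callPotential_measure hm]

lemma measure_le_of_convexOn_callPotential_sub (hm : Integrable (fun x : ℝ => x) m)
    (hn : Integrable (fun x : ℝ => x) n)
    (h : ConvexOn ℝ univ (callPotential n - callPotential m)) : m ≤ n := by
  rw [measure_eq_add_of_callPotential_eq_add hn (convexOn_callPotential hm) h
    (add_sub_cancel _ _), rightDerivStieltjes_callPotential_measure hm]
  exact Measure.le_add_right le_rfl

lemma callPotential_rightDerivStieltjes_measure {p : ℝ → ℝ} (hp : ConvexOn ℝ univ p)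
    [IsFiniteMeasure (rightDerivStieltjes hp).measure]
    (hint : Integrable (fun x : ℝ => x) (rightDerivStieltjes hp).measure)
    (htop : Tendsto p atTop (𝓝 0)) : callPotential (rightDerivStieltjes hp).measure = p := by
  set κ := (rightDerivStieltjes hp).measure
  set D := p - callPotential κ with D_def
  have hD : Continuous D :=
    (continuousOn_univ.1 (hp.continuousOn isOpen_univ)).sub (continuous_callPotential hint)
  have hincr : ∀ ⦃a b⦄, a ≤ b → rightDerivStieltjes hp a + κ.real (Ioi a) =
      rightDerivStieltjes hp b + κ.real (Ioi b) := fun a b hab => by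
    have hκ := real_rightDerivStieltjes_measure_Ioc hp hab
    rw [← Ioi_sdiff_Ioi, measureReal_sdiff (Ioi_subset_Ioi hab) measurableSet_Ioi] at hκ
    linarith
  set c := rightDerivStieltjes hp 0 + κ.real (Ioi 0)
  have hderiv : ∀ x, HasDerivWithinAt D c (Ioi x) x := fun x => by
    have hc : rightDerivStieltjes hp x - -κ.real (Ioi x) = c := by
      rw [sub_neg_eq_add]
      exact (le_total x 0).elim (fun h => hincr h) fun h => (hincr h).symm
    exact hc ▸ (hasDerivWithinAt_rightDerivStieltjes hp x).sub
      (hasDerivWithinAt_callPotential hint x)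
  have haffine : ∀ x, D x = D 0 + c * x := fun x => by
    rcases le_total 0 x with h | h
    · simpa using eq_add_mul_of_hasDerivWithinAt_Ioi_const hD.continuousOn h fun y _ => hderiv y
    · linarith [eq_add_mul_of_hasDerivWithinAt_Ioi_const hD.continuousOn h fun y _ => hderiv y]
  have hD_top : Tendsto D atTop (𝓝 0) := by
    rw [D_def, ← sub_zero (0 : ℝ)]
    exact htop.sub (tendsto_callPotential_atTop hint)
  obtain ⟨h0, hc⟩ := eq_zero_of_tendsto_affine_zero (tendsto_atTop_add_const_right _ 1 tendsto_id)
    (hD_top.congr haffine)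
  ext x
  have hDx := haffine x
  rw [h0, hc] at hDx
  simp only [D_def, Pi.sub_apply] at hDx
  linarith

end Potentials

section Hinge

open Set

lemma eq_taylor_left_of_convexOn {f : ℝ → ℝ} (hf : ConvexOn ℝ univ f) {a b : ℝ}
    (hab : a ≤ b) : f a = f b + rightDerivStieltjes hf b * (a - b) +
      ∫ k in Ioc a b, (k - a) ∂(rightDerivStieltjes hf).measure := by
  set κ := (rightDerivStieltjes hf).measure
  set κ' := κ.restrict (Ioc a b)
  have : IsFiniteMeasure κ' := isFiniteMeasure_restrict.2 measure_Ioc_lt_top.ne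
  have hκ' : Integrable (fun x : ℝ => x) κ' :=
    (continuous_id.integrableOn_Icc (μ := κ)).mono_set Ioc_subset_Icc_self
  have hcont : Continuous (f - callPotential κ') :=
    (continuousOn_univ.1 (hf.continuousOn isOpen_univ)).sub (continuous_callPotential hκ')
  have hderiv : ∀ x ∈ Ico a b,
      HasDerivWithinAt (f - callPotential κ') (rightDerivStieltjes hf b) (Ioi x) x := by
    intro x hx
    have hmass : κ'.real (Ioi x) = rightDerivStieltjes hf b - rightDerivStieltjes hf x := by
      rw [measureReal_restrict_apply measurableSet_Ioi, inter_comm, Ioc_inter_Ioi,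
        sup_eq_right.2 hx.1, real_rightDerivStieltjes_measure_Ioc hf hx.2.le]
    have hslope : rightDerivStieltjes hf x - -κ'.real (Ioi x) = rightDerivStieltjes hf b := by
      rw [hmass]
      ring
    exact hslope ▸ (hasDerivWithinAt_rightDerivStieltjes hf x).sub
      (hasDerivWithinAt_callPotential hκ' x)
  have hb : callPotential κ' b = 0 := setIntegral_eq_zero_of_forall_eq_zero fun x hx =>
    max_eq_right (sub_nonpos.2 hx.2)
  have ha : callPotential κ' a = ∫ k in Ioc a b, (k - a) ∂κ :=
    setIntegral_congr_fun measurableSet_Ioc fun x hx => max_eq_left (sub_nonneg.2 hx.1.le)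
  have haffine := eq_add_mul_of_hasDerivWithinAt_Ioi_const hcont.continuousOn hab hderiv
  simp only [Pi.sub_apply, hb, ha] at haffine
  linarith

lemma eq_taylor_right_of_convexOn {f : ℝ → ℝ} (hf : ConvexOn ℝ univ f) {a b : ℝ}
    (hab : a ≤ b) : f b = f a + rightDerivStieltjes hf a * (b - a) +
      ∫ k in Ioc a b, (b - k) ∂(rightDerivStieltjes hf).measure := by
  set κ := (rightDerivStieltjes hf).measure
  have hint : ∀ g : ℝ → ℝ, Continuous g → IntegrableOn g (Ioc a b) κ := fun g hg =>
    hg.integrableOn_Icc.mono_set Ioc_subset_Icc_self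
  have hsum : ∫ k in Ioc a b, (b - k) ∂κ + ∫ k in Ioc a b, (k - a) ∂κ =
      (rightDerivStieltjes hf b - rightDerivStieltjes hf a) * (b - a) := by
    rw [← integral_add (hint _ (by fun_prop)) (hint _ (by fun_prop))]
    simp only [sub_add_sub_cancel, setIntegral_const, smul_eq_mul]
    rw [real_rightDerivStieltjes_measure_Ioc hf hab]
  linear_combination -eq_taylor_left_of_convexOn hf hab - hsum

/-- The kernel of the Taylor remainder at `0`: for convex `f` the remainder at `x` is the integral
of `k ↦ hinge k x` against the second derivative of `f`. -/
noncomputable def hinge (k x : ℝ) : ℝ := if 0 < k then max (x - k) 0 else max (k - x) 0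

lemma hinge_nonneg (k x : ℝ) : 0 ≤ hinge k x := by
  unfold hinge
  split_ifs <;> exact le_max_right _ _

lemma measurable_hinge : Measurable (Function.uncurry hinge) :=
  Measurable.ite (measurableSet_lt measurable_const measurable_fst) (by fun_prop) (by fun_prop)

lemma hinge_eq_indicator_of_nonneg {x : ℝ} (hx : 0 ≤ x) :
    (fun k => hinge k x) = (Ioc 0 x).indicator fun k => x - k := by
  ext k
  simp only [hinge, indicator, mem_Ioc]
  grind

lemma hinge_eq_indicator_of_nonpos {x : ℝ} (hx : x ≤ 0) :
    (fun k => hinge k x) = (Ioc x 0).indicator fun k => k - x := by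
  ext k
  simp only [hinge, indicator, mem_Ioc]
  grind

lemma integrable_hinge (κ : Measure ℝ) [IsLocallyFiniteMeasure κ] (x : ℝ) :
    Integrable (fun k => hinge k x) κ := by
  rcases le_total 0 x with hx | hx
  · rw [hinge_eq_indicator_of_nonneg hx, integrable_indicator_iff measurableSet_Ioc]
    exact (Continuous.integrableOn_Icc (by fun_prop)).mono_set Ioc_subset_Icc_self
  · rw [hinge_eq_indicator_of_nonpos hx, integrable_indicator_iff measurableSet_Ioc]
    exact (Continuous.integrableOn_Icc (by fun_prop)).mono_set Ioc_subset_Icc_self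

lemma integral_hinge {f : ℝ → ℝ} (hf : ConvexOn ℝ univ f) (x : ℝ) :
    ∫ k, hinge k x ∂(rightDerivStieltjes hf).measure =
      f x - (f 0 + rightDerivStieltjes hf 0 * x) := by
  rcases le_total 0 x with hx | hx
  · rw [hinge_eq_indicator_of_nonneg hx, integral_indicator measurableSet_Ioc]
    linear_combination -eq_taylor_right_of_convexOn hf hx
  · rw [hinge_eq_indicator_of_nonpos hx, integral_indicator measurableSet_Ioc]
    linear_combination -eq_taylor_left_of_convexOn hf hx

lemma sub_tangent_nonneg {f : ℝ → ℝ} (hf : ConvexOn ℝ univ f) (x : ℝ) :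
    0 ≤ f x - (f 0 + rightDerivStieltjes hf 0 * x) :=
  integral_hinge hf x ▸ integral_nonneg fun k => hinge_nonneg k x

lemma lintegral_hinge {m : Measure ℝ} [IsFiniteMeasure m] (hm : Integrable (fun x : ℝ => x) m)
    (k : ℝ) : ∫⁻ x, ENNReal.ofReal (hinge k x) ∂m =
      ENNReal.ofReal (if 0 < k then callPotential m k else putPotential m k) := by
  simp only [hinge]
  split_ifs
  · exact (ofReal_integral_eq_lintegral_ofReal (integrable_call hm k)
      (ae_of_all _ fun _ => le_max_right _ _)).symm
  · exact (ofReal_integral_eq_lintegral_ofReal (integrable_put hm k)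
      (ae_of_all _ fun _ => le_max_right _ _)).symm

lemma integral_sub_affine {m : Measure ℝ} [IsFiniteMeasure m] {φ : ℝ → ℝ}
    (hm : Integrable (fun x : ℝ => x) m) (hφm : Integrable φ m) (c d : ℝ) :
    ∫ x, (φ x - (c + d * x)) ∂m = ∫ x, φ x ∂m - (m.real univ * c + d * ∫ x, x ∂m) := by
  have hlin : Integrable (fun x => d * x) m := hm.const_mul d
  have haffine : Integrable (fun x => c + d * x) m := (integrable_const c).add hlin
  rw [integral_sub hφm haffine, integral_add (integrable_const c) hlin,
    integral_const, integral_const_mul, smul_eq_mul]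

lemma ofReal_integral_sub_tangent {m : Measure ℝ} [IsFiniteMeasure m] {φ : ℝ → ℝ}
    (hφ : ConvexOn ℝ univ φ) (hm : Integrable (fun x : ℝ => x) m) (hφm : Integrable φ m) :
    ENNReal.ofReal (∫ x, (φ x - (φ 0 + rightDerivStieltjes hφ 0 * x)) ∂m) =
      ∫⁻ k, ∫⁻ x, ENNReal.ofReal (hinge k x) ∂m ∂(rightDerivStieltjes hφ).measure := by
  have hint : Integrable (fun x => φ x - (φ 0 + rightDerivStieltjes hφ 0 * x)) m :=
    hφm.sub ((integrable_const _).add (hm.const_mul _))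
  rw [lintegral_lintegral_swap measurable_hinge.ennreal_ofReal.aemeasurable,
    ofReal_integral_eq_lintegral_ofReal hint (ae_of_all _ (sub_tangent_nonneg hφ))]
  refine lintegral_congr fun x => ?_
  rw [← integral_hinge hφ, ofReal_integral_eq_lintegral_ofReal (integrable_hinge _ x)
    (ae_of_all _ fun k => hinge_nonneg k x)]

end Hinge

section ConvexOrder

open Set Filter Topology

variable {γ η : Measure ℝ} [IsFiniteMeasure γ] [IsFiniteMeasure η]

lemma ConvexOrder.measure_univ_eq (h : ConvexOrder γ η) : γ univ = η univ := by
  have hpos := h (fun _ => 1) (convexOn_const 1 convex_univ) (integrable_const 1)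
    (integrable_const 1)
  have hneg := h (fun _ => -1) (convexOn_const (-1) convex_univ) (integrable_const (-1))
    (integrable_const (-1))
  simp only [integral_const, smul_eq_mul, mul_one, mul_neg, neg_le_neg_iff] at hpos hneg
  exact (measureReal_eq_measureReal_iff).1 (le_antisymm hpos hneg)

lemma ConvexOrder.callPotential_le (hγ : Integrable (fun x : ℝ => x) γ)
    (hη : Integrable (fun x : ℝ => x) η) (h : ConvexOrder γ η) :
    callPotential γ ≤ callPotential η := fun k =>
  h _ (convexOn_call k) (integrable_call hγ k) (integrable_call hη k)

lemma ConvexOrder.putPotential_le (hγ : Integrable (fun x : ℝ => x) γ)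
    (hη : Integrable (fun x : ℝ => x) η) (h : ConvexOrder γ η) :
    putPotential γ ≤ putPotential η := fun k =>
  h _ (convexOn_put k) (integrable_put hγ k) (integrable_put hη k)

lemma convexOrder_of_callPotential_le (hγ : Integrable (fun x : ℝ => x) γ)
    (hη : Integrable (fun x : ℝ => x) η) (hmass : γ.real univ = η.real univ)
    (hmean : ∫ x, x ∂γ = ∫ x, x ∂η) (hle : callPotential γ ≤ callPotential η) :
    ConvexOrder γ η := by
  intro φ hφ hφγ hφη
  have hput : putPotential γ ≤ putPotential η := fun k => by
    rw [putPotential_eq hγ, putPotential_eq hη, hmass, hmean]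
    linarith [hle k]
  have hremainder : ∫ x, (φ x - (φ 0 + rightDerivStieltjes hφ 0 * x)) ∂γ ≤
      ∫ x, (φ x - (φ 0 + rightDerivStieltjes hφ 0 * x)) ∂η := by
    rw [← ENNReal.ofReal_le_ofReal_iff (integral_nonneg (sub_tangent_nonneg hφ)),
      ofReal_integral_sub_tangent hφ hγ hφγ, ofReal_integral_sub_tangent hφ hη hφη]
    refine lintegral_mono fun k => ?_
    rw [lintegral_hinge hγ, lintegral_hinge hη]
    gcongr
    split_ifs
    exacts [hle k, hput k]
  rw [integral_sub_affine hγ hφγ, integral_sub_affine hη hφη, hmass, hmean] at hremainder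
  linarith

-- Put potentials vanish at `-∞`, where the call potentials therefore see both mass and mean.
lemma convexOrder_of_tendsto_callPotential_sub (hγ : Integrable (fun x : ℝ => x) γ)
    (hη : Integrable (fun x : ℝ => x) η) (hle : callPotential γ ≤ callPotential η)
    (hlim : Tendsto (callPotential η - callPotential γ) atBot (𝓝 0)) : ConvexOrder γ η := by
  have haffine : Tendsto (fun k => (∫ x, x ∂η - ∫ x, x ∂γ) + (γ.real univ - η.real univ) * k)
      atBot (𝓝 0) := by
    have hput := (tendsto_putPotential_atBot hη).sub (tendsto_putPotential_atBot hγ)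
    have hdiff := hlim.sub hput
    rw [sub_zero, sub_zero] at hdiff
    refine hdiff.congr fun k => ?_
    rw [Pi.sub_apply, putPotential_eq hη, putPotential_eq hγ]
    ring
  obtain ⟨hmean, hmass⟩ := eq_zero_of_tendsto_affine_zero
    (tendsto_atBot_add_const_right _ 1 tendsto_id) haffine
  exact convexOrder_of_callPotential_le hγ hη (sub_eq_zero.1 hmass) (sub_eq_zero.1 hmean).symm hle

end ConvexOrder

section Shadow

open Set Filter Topology

variable {γ η ν : Measure ℝ} [IsFiniteMeasure γ] [IsFiniteMeasure ν]

lemma exists_convexOrder_le_callPotential_eq {p : ℝ → ℝ} (hγ : Integrable (fun x : ℝ => x) γ)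
    (hν : Integrable (fun x : ℝ => x) ν) (hp : ConvexOn ℝ univ p)
    (hνp : ConvexOn ℝ univ (callPotential ν - p)) (hγp : callPotential γ ≤ p)
    (hpν : p ≤ callPotential ν) (hput : p - callPotential γ ≤ putPotential ν - putPotential γ) :
    ∃ η, ConvexOrder γ η ∧ η ≤ ν ∧ callPotential η = p := by
  set η := (rightDerivStieltjes hp).measure
  have hle : η ≤ ν := by
    rw [measure_eq_add_of_callPotential_eq_add hν hp hνp (add_sub_cancel _ _)]
    exact Measure.le_add_right le_rfl
  have : IsFiniteMeasure η := isFiniteMeasure_of_le ν hle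
  have hη : Integrable (fun x : ℝ => x) η := hν.mono_measure hle
  have hpη : callPotential η = p := callPotential_rightDerivStieltjes_measure hp hη <|
    tendsto_of_tendsto_of_tendsto_of_le_of_le (tendsto_callPotential_atTop hγ)
      (tendsto_callPotential_atTop hν) hγp hpν
  refine ⟨η, convexOrder_of_tendsto_callPotential_sub hγ hη (hpη ▸ hγp) ?_, hle, hpη⟩
  have hlim := (tendsto_putPotential_atBot hν).sub (tendsto_putPotential_atBot hγ)
  rw [sub_zero] at hlim
  exact squeeze_zero (fun k => sub_nonneg.2 ((hpη ▸ hγp) k)) (hpη ▸ hput) hlim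

lemma exists_convexOrder_le_callPotential_eq_sub {q : ℝ → ℝ} (hγ : Integrable (fun x : ℝ => x) γ)
    (hν : Integrable (fun x : ℝ => x) ν) (hcall : callPotential γ ≤ callPotential ν)
    (hput : putPotential γ ≤ putPotential ν)
    (hq : IsConvexEnvelope (callPotential ν - callPotential γ) q) :
    ∃ η, ConvexOrder γ η ∧ η ≤ ν ∧ callPotential η = callPotential ν - q := by
  have hq_nonneg : 0 ≤ q := hq.2 ⟨convexOn_const 0 convex_univ, sub_nonneg.2 hcall⟩
  have haffine : ConvexOn ℝ univ
      (callPotential ν - callPotential γ - (putPotential ν - putPotential γ)) :=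
    (convexOn_affine (∫ x, x ∂ν - ∫ x, x ∂γ) (γ.real univ - ν.real univ)).congr fun k _ => by
      simp only [Pi.sub_apply, putPotential_eq hν, putPotential_eq hγ]
      ring
  have hq_put : callPotential ν - callPotential γ - (putPotential ν - putPotential γ) ≤ q :=
    hq.2 ⟨haffine, sub_le_self _ (sub_nonneg.2 hput)⟩
  refine exists_convexOrder_le_callPotential_eq hγ hν
    (hq.convexOn_sub (convexOn_callPotential hν) (convexOn_callPotential hγ)) ?_
    (le_sub_comm.1 hq.1.2) (sub_le_self _ hq_nonneg) ?_
  · rw [sub_sub_cancel]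
    exact hq.1.1
  · rw [sub_right_comm]
    exact sub_le_comm.1 hq_put

namespace IsShadow

lemma isConvexEnvelope (hγ : Integrable (fun x : ℝ => x) γ) (hν : Integrable (fun x : ℝ => x) ν)
    (h : IsShadow γ ν η) : IsConvexEnvelope (callPotential ν - callPotential γ)
      (callPotential ν - callPotential η) := by
  obtain ⟨hγη, hην, hmin⟩ := h
  have : IsFiniteMeasure η := isFiniteMeasure_of_le ν hην
  have : IsFiniteMeasure (ν - η) := isFiniteMeasure_of_le ν Measure.sub_le
  have hη : Integrable (fun x : ℝ => x) η := hν.mono_measure hην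
  have hcall : callPotential γ ≤ callPotential η := hγη.callPotential_le hγ hη
  have hconv : ConvexOn ℝ univ (callPotential ν - callPotential η) :=
    callPotential_sub hν hην ▸ convexOn_callPotential (hν.mono_measure Measure.sub_le)
  have hminor : callPotential ν - callPotential η ≤ callPotential ν - callPotential γ :=
    sub_le_sub_left hcall _
  obtain ⟨q, hq⟩ := exists_isConvexEnvelope hconv hminor
  obtain ⟨η', hγη', hη'ν, hη'q⟩ := exists_convexOrder_le_callPotential_eq_sub hγ hν
    (hcall.trans (callPotential_mono hν hην))
    ((hγη.putPotential_le hγ hη).trans (putPotential_mono hν hην)) hq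
  have : IsFiniteMeasure η' := isFiniteMeasure_of_le ν hη'ν
  have hle : callPotential η ≤ callPotential ν - q :=
    hη'q ▸ (hmin η' hγη' hη'ν).callPotential_le hη (hν.mono_measure hη'ν)
  rwa [le_antisymm (hq.2 ⟨hconv, hminor⟩) (le_sub_comm.1 hle)]

lemma mono {γ₁ γ₂ η₁ η₂ : Measure ℝ} [IsFiniteMeasure γ₂] (hγ₂ : Integrable (fun x : ℝ => x) γ₂)
    (hν : Integrable (fun x : ℝ => x) ν) (hle : γ₁ ≤ γ₂) (h₁ : IsShadow γ₁ ν η₁)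
    (h₂ : IsShadow γ₂ ν η₂) : η₁ ≤ η₂ := by
  have : IsFiniteMeasure γ₁ := isFiniteMeasure_of_le γ₂ hle
  have : IsFiniteMeasure (γ₂ - γ₁) := isFiniteMeasure_of_le γ₂ Measure.sub_le
  have : IsFiniteMeasure η₁ := isFiniteMeasure_of_le ν h₁.2.1
  have : IsFiniteMeasure η₂ := isFiniteMeasure_of_le ν h₂.2.1
  have hq₁ := h₁.isConvexEnvelope (hγ₂.mono_measure hle) hν
  have hq₂ := h₂.isConvexEnvelope hγ₂ hν
  have hc : ConvexOn ℝ univ (callPotential (γ₂ - γ₁)) :=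
    convexOn_callPotential (hγ₂.mono_measure Measure.sub_le)
  rw [← sub_sub_sub_cancel_right (callPotential ν) _ (callPotential γ₁),
    ← callPotential_sub hγ₂ hle] at hq₂
  have hconv := (hq₁.sub_convexOn hc hq₂).convexOn_sub hq₁.1.1 hc
  rw [sub_sub_sub_cancel_left] at hconv
  exact measure_le_of_convexOn_callPotential_sub (hν.mono_measure h₁.2.1)
    (hν.mono_measure h₂.2.1) hconv

end IsShadow

end Shadow

theorem shadow_curve_primitive_general {ι : Type*} [Preorder ι] {ν : Measure ℝ} [IsFiniteMeasure ν]
    (hν : Integrable (fun x : ℝ => x) ν) {μc νc : ι → Measure ℝ} [∀ i, IsFiniteMeasure (μc i)]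
    (hμc : ∀ i, Integrable (fun x : ℝ => x) (μc i)) (hmono : Monotone μc)
    (hshadow : ∀ i, IsShadow (μc i) ν (νc i)) :
    Monotone νc ∧ ∀ i, νc i Set.univ = μc i Set.univ := by
  refine ⟨fun i j hij => (hshadow i).mono (hμc j) hν (hmono hij) (hshadow j), fun i => ?_⟩
  have : IsFiniteMeasure (νc i) := isFiniteMeasure_of_le ν (hshadow i).2.1
  exact (hshadow i).1.measure_univ_eq.symm

/-- The shadow of a primitive curve is again a primitive curve: if `(μ_{[0,u]})` is
increasing with mass `u` and `μ_{[0,1]} = μ ≤_c ν`, then `ν_{[0,u]} = S^ν(μ_{[0,u]})`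
is increasing in `u` with mass `u`. -/
theorem shadow_curve_primitive (μ ν : Measure ℝ)
    [IsProbabilityMeasure μ] [IsProbabilityMeasure ν]
    (hμ : Integrable (fun x : ℝ => x) μ) (hν : Integrable (fun x : ℝ => x) ν)
    (hμν : ConvexOrder μ ν)
    (μc : ℝ → Measure ℝ)
    (hmono : ∀ u v : ℝ, 0 ≤ u → u ≤ v → v ≤ 1 → μc u ≤ μc v)
    (hmass : ∀ u ∈ Set.Icc (0:ℝ) 1, μc u Set.univ = ENNReal.ofReal u)
    (htop : μc 1 = μ)
    (νc : ℝ → Measure ℝ)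
    (hshadow : ∀ u ∈ Set.Icc (0:ℝ) 1, IsShadow (μc u) ν (νc u)) :
    (∀ u v : ℝ, 0 ≤ u → u ≤ v → v ≤ 1 → νc u ≤ νc v) ∧
      ∀ u ∈ Set.Icc (0:ℝ) 1, νc u Set.univ = ENNReal.ofReal u := by
  have hle : ∀ u : Set.Icc (0 : ℝ) 1, μc u ≤ μ := fun u => htop ▸ hmono u 1 u.2.1 u.2.2 le_rfl
  have : ∀ u : Set.Icc (0 : ℝ) 1, IsFiniteMeasure (μc u) := fun u => isFiniteMeasure_of_le μ (hle u)
  obtain ⟨hνc, hνc_mass⟩ := shadow_curve_primitive_general hν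
    (μc := fun u : Set.Icc (0 : ℝ) 1 => μc u) (νc := fun u => νc u)
    (fun u => hμ.mono_measure (hle u)) (fun u v huv => hmono u v u.2.1 huv v.2.2)
    fun u => hshadow u u.2
  exact ⟨fun u v hu huv hv => hνc (a := ⟨u, hu, huv.trans hv⟩) (b := ⟨v, hu.trans huv, hv⟩) huv,
    fun u hu => (hνc_mass ⟨u, hu⟩).trans (hmass u hu)⟩
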